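/- Let k, m be positive integers. The dimension of R(k,m) as a vector space over ZMod 2 equals the product (m+1)(m+2)…(m+k). -/

import Mathlib

/-!
Everything works over an arbitrary nontrivial commutative ring `K` of coefficients. The recurrence
`h_{d+1}(l, x) = h_{d+1}(l) + x * h_d(l, x)` shows that `h_d(x_1, …, x_j)` is monic of degree `d` in
its last variable. Among the generators of the ideal for `(k+1, m)`, only `h_{m+1}(x_1, …, x_{k+1})`
involves `x_{k+1}`, and the others are the generators for `(k, m+1)`. Hence `R(k+1, m)` arises from
`R(k, m+1)` by adjoining a root of a monic polynomial of degree `m+1`, and so is free of rank `m+1`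
over it. For `K = ZMod 2` this is the algebraic form of the fibre bundle
`F(1^{k+1}, m) → F(1^k, m+1)` with fibre `ℝP^m`.
-/

open scoped TensorProduct

/-- Complete homogeneous symmetric polynomial of degree `d` in a list of elements
of a commutative (semi)ring: `h_d(l)`. -/
noncomputable def completeHomog {R : Type*} [CommSemiring R] : List R → ℕ → R
  | [], 0 => 1
  | [], _ + 1 => 0
  | x :: l, d => ∑ t ∈ Finset.range (d + 1), x ^ t * completeHomog l (d - t)

/-- Elementary symmetric polynomial of degree `d` in a list of elements: `e_d(l)`. -/
noncomputable def elemSymm {R : Type*} [CommSemiring R] : List R → ℕ → R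
  | _, 0 => 1
  | [], _ + 1 => 0
  | x :: l, d + 1 => elemSymm l (d + 1) + x * elemSymm l d

/-- The ideal of `(ZMod 2)[x_1, …, x_k]` generated by the complete homogeneous
symmetric polynomials `h_{m+i}(x_1, …, x_{k+1-i})` for `1 ≤ i ≤ k`. -/
noncomputable def flagIdeal (k m : ℕ) : Ideal (MvPolynomial (Fin k) (ZMod 2)) :=
  Ideal.span { p | ∃ i : ℕ, 1 ≤ i ∧ i ≤ k ∧
    p = completeHomog (((List.finRange k).take (k + 1 - i)).map MvPolynomial.X) (m + i) }

/-- `R(k,m)`, the quotient of `(ZMod 2)[x_1, …, x_k]` by `flagIdeal k m`;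
this is the mod-2 cohomology ring of the real flag manifold `F(1^k, m)`. -/
abbrev FlagRing (k m : ℕ) : Type :=
  MvPolynomial (Fin k) (ZMod 2) ⧸ flagIdeal k m

/-- The image of the variable `x_{j+1}` in `R(k,m)` (`j` is 0-indexed). -/
noncomputable def xGen (k m : ℕ) (j : Fin k) : FlagRing k m :=
  Ideal.Quotient.mk (flagIdeal k m) (MvPolynomial.X j)

/-- The zero-divisor `z_{j+1} = x_{j+1} ⊗ 1 + 1 ⊗ x_{j+1}` in `R(k,m) ⊗ R(k,m)`. -/
noncomputable def zGen (k m : ℕ) (j : Fin k) :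
    FlagRing k m ⊗[ZMod 2] FlagRing k m :=
  xGen k m j ⊗ₜ 1 + 1 ⊗ₜ xGen k m j

/-- `x_{i+1,j+1}` in the `s`-fold tensor power `R(k,m)^{⊗ s}`: the element having
`x_{j+1}` in the `(i+1)`-st tensor factor and `1` elsewhere (`i`, `j` 0-indexed). -/
noncomputable def xT (k m s : ℕ) (i : Fin s) (j : Fin k) :
    ⨂[ZMod 2] _ : Fin s, FlagRing k m :=
  PiTensorProduct.tprod (ZMod 2) (fun t => if t = i then xGen k m j else 1)

/-- The `s`-th zero-divisor `z_{i+1,j+1} = x_{1,j+1} + x_{i+1,j+1}` in `R(k,m)^{⊗ s}`. -/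
noncomputable def zT (k m s : ℕ) (hs : 0 < s) (i : Fin s) (j : Fin k) :
    ⨂[ZMod 2] _ : Fin s, FlagRing k m :=
  xT k m s ⟨0, hs⟩ j + xT k m s i j

section CompleteHomog

variable {R S : Type*} [CommSemiring R] [CommSemiring S]

theorem completeHomog_zero (l : List R) : completeHomog l 0 = 1 := by
  induction l with
  | nil => rw [completeHomog]
  | cons x l ih => simp [completeHomog, ih]

theorem completeHomog_cons_succ (x : R) (l : List R) (d : ℕ) :
    completeHomog (x :: l) (d + 1) = completeHomog l (d + 1) + x * completeHomog (x :: l) d := by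
  simp only [completeHomog]
  rw [Finset.sum_range_succ', Finset.mul_sum, add_comm]
  simp [pow_succ', mul_assoc]

theorem completeHomog_concat_succ (l : List R) (x : R) (d : ℕ) :
    completeHomog (l ++ [x]) (d + 1) =
      completeHomog l (d + 1) + x * completeHomog (l ++ [x]) d := by
  induction l generalizing d with
  | nil => exact completeHomog_cons_succ x [] d
  | cons y l ih =>
    simp only [List.cons_append]
    induction d with
    | zero =>
      simp only [completeHomog_cons_succ, completeHomog_zero, ih]
      ring
    | succ d ihd =>
      calc completeHomog (y :: (l ++ [x])) (d + 2)
          = completeHomog (l ++ [x]) (d + 2) + y * completeHomog (y :: (l ++ [x])) (d + 1) :=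
            completeHomog_cons_succ ..
        _ = (completeHomog l (d + 2) + x * completeHomog (l ++ [x]) (d + 1)) +
              y * (completeHomog (y :: l) (d + 1) + x * completeHomog (y :: (l ++ [x])) d) := by
            rw [ih, ihd]
        _ = (completeHomog l (d + 2) + y * completeHomog (y :: l) (d + 1)) +
              x * (completeHomog (l ++ [x]) (d + 1) + y * completeHomog (y :: (l ++ [x])) d) := by
            ring
        _ = completeHomog (y :: l) (d + 2) + x * completeHomog (y :: (l ++ [x])) (d + 1) := by
            rw [completeHomog_cons_succ y l (d + 1), completeHomog_cons_succ y (l ++ [x]) d]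

theorem map_completeHomog {F : Type*} [FunLike F R S] [RingHomClass F R S] (f : F)
    (l : List R) (d : ℕ) : f (completeHomog l d) = completeHomog (l.map f) d := by
  induction l generalizing d with
  | nil => cases d <;> simp [completeHomog]
  | cons x l ih => simp [completeHomog, ih]

end CompleteHomog

theorem isMonicOfDegree_completeHomog {R : Type*} [CommSemiring R] [Nontrivial R]
    (l : List R) (d : ℕ) :
    (completeHomog (l.map Polynomial.C ++ [Polynomial.X]) d).IsMonicOfDegree d := by
  induction d with
  | zero => rw [completeHomog_zero, Polynomial.isMonicOfDegree_zero_iff]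
  | succ d ih =>
    rw [completeHomog_concat_succ, ← map_completeHomog, add_comm, add_comm d]
    refine ((Polynomial.isMonicOfDegree_X R).mul ih).add_right ?_
    rw [Polynomial.natDegree_C]
    omega

section AdjoinRoot

variable (K : Type*) {A : Type*} [CommRing K] [CommRing A] [Algebra K A] [Module.Free K A]
  {q : Polynomial A}

theorem free_adjoinRoot_of_monic (hq : q.Monic) : Module.Free K (AdjoinRoot q) :=
  have := hq.free_adjoinRoot
  Module.Free.trans (R := K) (S := A)

theorem finrank_adjoinRoot_of_monic [Nontrivial A] (hq : q.Monic) :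
    Module.finrank K (AdjoinRoot q) = Module.finrank K A * q.natDegree := by
  have := hq.free_adjoinRoot
  have := (algebraMap K A).domain_nontrivial
  rw [← Module.finrank_mul_finrank K A (AdjoinRoot q), (AdjoinRoot.powerBasis' hq).finrank,
    AdjoinRoot.powerBasis'_dim]

end AdjoinRoot

/-- The identification of `R[X] ⧸ (I, q)` with `(R ⧸ I)[X] ⧸ (q mod I)`. -/
noncomputable def quotientMapCSupSpanEquiv {R : Type*} [CommRing R] (I : Ideal R)
    (q : Polynomial R) :
    (Polynomial R ⧸ (Ideal.span {q} ⊔ I.map Polynomial.C)) ≃ₐ[R]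
      AdjoinRoot (q.map (Ideal.Quotient.mk I)) :=
  (DoubleQuot.quotQuotEquivQuotSupₐ R (Ideal.span {q}) (I.map Polynomial.C)).symm.trans <|
    (Ideal.quotientEquivAlgOfEq R (Ideal.map_map Polynomial.C (AdjoinRoot.mk q))).trans <|
      AdjoinRoot.quotEquivQuotMap q I

section FlagRing

variable (K : Type*) [CommRing K]

/-- The list `x_1, …, x_j` of the first `j` variables of `K[x_1, …, x_k]`, for `j ≤ k`. -/
noncomputable def firstVars (k j : ℕ) : List (MvPolynomial (Fin k) K) :=
  ((List.finRange k).take j).map MvPolynomial.X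

/-- The ideal of `flagIdeal` over an arbitrary coefficient ring `K`: its generators are the
`h_{m+i+1}(x_1, …, x_{k-i})`, where `i` is 0-indexed. -/
noncomputable def flagIdealOver (k m : ℕ) : Ideal (MvPolynomial (Fin k) K) :=
  Ideal.span (Set.range fun i : Fin k => completeHomog (firstVars K k (k - i)) (m + i + 1))

/-- The ring `R(k, m)` over an arbitrary coefficient ring `K`. -/
abbrev FlagRingOver (k m : ℕ) : Type _ :=
  MvPolynomial (Fin k) K ⧸ flagIdealOver K k m

theorem flagIdeal_eq_flagIdealOver (k m : ℕ) : flagIdeal k m = flagIdealOver (ZMod 2) k m := by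
  unfold flagIdeal flagIdealOver firstVars
  congr 1
  ext p
  constructor
  · rintro ⟨i, hi, hik, rfl⟩
    refine ⟨⟨i - 1, by omega⟩, ?_⟩
    simp only [show k - (i - 1) = k + 1 - i by omega, show m + (i - 1) + 1 = m + i by omega]
  · rintro ⟨i, rfl⟩
    refine ⟨i + 1, by omega, i.isLt, ?_⟩
    simp only [Nat.add_sub_add_right, add_assoc]

/-- `K[x_1, …, x_{k+1}]` as polynomials in the last variable `x_{k+1}` over `K[x_1, …, x_k]`. -/
noncomputable def lastVarEquiv (k : ℕ) :
    MvPolynomial (Fin (k + 1)) K ≃ₐ[K] Polynomial (MvPolynomial (Fin k) K) :=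
  (MvPolynomial.renameEquiv K finSuccEquivLast).trans (MvPolynomial.optionEquivLeft K (Fin k))

theorem lastVarEquiv_X_castSucc (k : ℕ) (i : Fin k) :
    lastVarEquiv K k (MvPolynomial.X i.castSucc) = Polynomial.C (MvPolynomial.X i) := by
  simp [lastVarEquiv]

theorem lastVarEquiv_X_last (k : ℕ) :
    lastVarEquiv K k (MvPolynomial.X (Fin.last k)) = Polynomial.X := by
  simp [lastVarEquiv]

theorem map_lastVarEquiv_firstVars_of_le {k j : ℕ} (hj : j ≤ k) :
    (firstVars K (k + 1) j).map (lastVarEquiv K k) = (firstVars K k j).map Polynomial.C := by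
  rw [firstVars, firstVars, List.finRange_succ_last, List.take_append_of_le_length (by simpa),
    ← List.map_take]
  simp only [List.map_map]
  exact List.map_congr_left fun i _ => lastVarEquiv_X_castSucc K k i

theorem firstVars_succ_self (k : ℕ) :
    firstVars K (k + 1) (k + 1) = firstVars K (k + 1) k ++ [MvPolynomial.X (Fin.last k)] := by
  simp [firstVars, List.finRange_succ_last]

theorem map_lastVarEquiv_firstVars_self (k : ℕ) :
    (firstVars K (k + 1) (k + 1)).map (lastVarEquiv K k) =
      (firstVars K k k).map Polynomial.C ++ [Polynomial.X] := by
  rw [firstVars_succ_self, List.map_append, map_lastVarEquiv_firstVars_of_le K le_rfl,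
    List.map_singleton, lastVarEquiv_X_last]

/-- The polynomial `h_d(x_1, …, x_k, X)` in the last variable `X`, over `K[x_1, …, x_k]`. -/
noncomputable def lastGenerator (k d : ℕ) : Polynomial (MvPolynomial (Fin k) K) :=
  completeHomog ((firstVars K k k).map Polynomial.C ++ [Polynomial.X]) d

theorem map_lastVarEquiv_flagIdealOver_succ (k m : ℕ) :
    (flagIdealOver K (k + 1) m).map (lastVarEquiv K k : _ →+* _) =
      Ideal.span {lastGenerator K k (m + 1)} ⊔ (flagIdealOver K k (m + 1)).map Polynomial.C := by
  have hlast : lastVarEquiv K k (completeHomog (firstVars K (k + 1) (k + 1)) (m + 1)) =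
      lastGenerator K k (m + 1) := by
    rw [map_completeHomog, map_lastVarEquiv_firstVars_self, lastGenerator]
  have hinit (i : Fin k) :
      lastVarEquiv K k (completeHomog (firstVars K (k + 1) (k - i)) (m + (i + 1) + 1)) =
        Polynomial.C (completeHomog (firstVars K k (k - i)) (m + 1 + i + 1)) := by
    rw [map_completeHomog, map_lastVarEquiv_firstVars_of_le K (Nat.sub_le k i), map_completeHomog,
      add_right_comm m 1, add_assoc m i 1]
  simp only [flagIdealOver, Ideal.map_span, ← Ideal.span_union, ← Set.range_comp]
  rw [Fin.range_fin_succ, Set.insert_eq]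
  simp [Function.comp_def, Fin.tail_def, hlast, hinit]

/-- `R(k+1, m)` is obtained from `R(k, m+1)` by adjoining a root of `h_{m+1}(x_1, …, x_k, X)`. -/
noncomputable def flagRingOverSuccEquiv (k m : ℕ) :
    FlagRingOver K (k + 1) m ≃ₐ[K]
      AdjoinRoot ((lastGenerator K k (m + 1)).map
        (Ideal.Quotient.mk (flagIdealOver K k (m + 1)))) :=
  (Ideal.quotientEquivAlg _ _ (lastVarEquiv K k)
    (map_lastVarEquiv_flagIdealOver_succ K k m).symm).trans <|
      (quotientMapCSupSpanEquiv (flagIdealOver K k (m + 1))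
        (lastGenerator K k (m + 1))).restrictScalars K

/-- In no variables there are no relations, so `R(0, m)` is the coefficient ring. -/
noncomputable def flagRingOverZeroEquiv (m : ℕ) : FlagRingOver K 0 m ≃ₐ[K] K :=
  (Ideal.quotientEquivAlgOfEq K (by simp [flagIdealOver])).trans <|
    (AlgEquiv.quotientBot K _).trans (MvPolynomial.isEmptyAlgEquiv K (Fin 0))

variable [Nontrivial K]

theorem isMonicOfDegree_lastGenerator (k d : ℕ) : (lastGenerator K k d).IsMonicOfDegree d :=
  isMonicOfDegree_completeHomog _ d

instance free_flagRingOver (k m : ℕ) : Module.Free K (FlagRingOver K k m) := by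
  induction k generalizing m with
  | zero => exact Module.Free.of_equiv (flagRingOverZeroEquiv K m).symm.toLinearEquiv
  | succ k ih =>
    have hq := (isMonicOfDegree_lastGenerator K k (m + 1)).monic
    have := ih (m + 1)
    have := free_adjoinRoot_of_monic K (hq.map (Ideal.Quotient.mk (flagIdealOver K k (m + 1))))
    exact Module.Free.of_equiv (flagRingOverSuccEquiv K k m).symm.toLinearEquiv

theorem finrank_flagRingOver_succ (k m : ℕ) [Nontrivial (FlagRingOver K k (m + 1))] :
    Module.finrank K (FlagRingOver K (k + 1) m) =
      Module.finrank K (FlagRingOver K k (m + 1)) * (m + 1) := by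
  have hq := isMonicOfDegree_lastGenerator K k (m + 1)
  rw [(flagRingOverSuccEquiv K k m).toLinearEquiv.finrank_eq,
    finrank_adjoinRoot_of_monic K (hq.monic.map _), hq.monic.natDegree_map, hq.natDegree_eq]

end FlagRing

theorem statement1_general (K : Type*) [CommRing K] [Nontrivial K] (k m : ℕ) :
    Module.finrank K (FlagRingOver K k m) = ∏ i ∈ Finset.range k, (m + i + 1) := by
  induction k generalizing m with
  | zero => rw [(flagRingOverZeroEquiv K m).toLinearEquiv.finrank_eq, Module.finrank_self,
      Finset.prod_range_zero]
  | succ k ih =>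
    have hpos : 0 < Module.finrank K (FlagRingOver K k (m + 1)) :=
      ih (m + 1) ▸ Finset.prod_pos fun i _ => Nat.succ_pos _
    have := Module.nontrivial_of_finrank_pos hpos
    rw [finrank_flagRingOver_succ, ih, Finset.prod_range_succ']
    simp only [add_zero, add_right_comm m 1, add_assoc]

/-- `dim_{ZMod 2} R(k,m) = (m+1)(m+2)⋯(m+k)`. -/
theorem statement1 (k m : ℕ) (hk : 0 < k) (hm : 0 < m) :
    Module.finrank (ZMod 2) (FlagRing k m) = ∏ i ∈ Finset.range k, (m + i + 1) := by
  unfold FlagRing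
  rw [flagIdeal_eq_flagIdealOver]
  exact statement1_general (ZMod 2) k m
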